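/- Let 𝔽_r ⊆ 𝔽_l be finite fields with l = r^h, and let C ⊆ 𝔽_l^n be an 𝔽_l-linear code of dimension k over 𝔽_l. Then the dimension k₀ of the subfield subcode C|𝔽_r over 𝔽_r satisfies k₀ = n − h(n − k) + dim_{𝔽_r} ker(Tr|_{C^⊥}), where Tr|_{C^⊥}: C^⊥ → 𝔽_r^n is the coordinatewise trace map restricted to the dual code C^⊥ and its kernel is an 𝔽_r-subspace of C^⊥ (Véron's formula). -/

import Mathlib

/-- The dual of a code in F^ι with respect to the standard bilinear form
⟨u,v⟩ = Σ_i u_i v_i. -/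
def dualCode {F : Type*} [Field F] {ι : Type*} [Fintype ι]
    (C : Submodule F (ι → F)) : Submodule F (ι → F) where
  carrier := {c | ∀ u ∈ C, ∑ i, u i * c i = 0}
  zero_mem' := by simp
  add_mem' := by
    intro a b ha hb u hu
    have := ha u hu
    have := hb u hu
    simp only [Pi.add_apply, mul_add, Finset.sum_add_distrib, *]
    simp
  smul_mem' := by
    intro c a ha u hu
    have h := ha u hu
    simp only [Pi.smul_apply, smul_eq_mul, mul_left_comm, ← Finset.mul_sum, h, mul_zero]

/-- The trace map Tr : 𝔽_{r^h} → 𝔽_r, x ↦ x + x^r + ⋯ + x^{r^{h-1}}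
(with values regarded in the big field). -/
def trFun (L : Type*) [Field L] (r h : ℕ) (x : L) : L :=
  ∑ k ∈ Finset.range h, x ^ r ^ k

/-- The subfield subcode C|𝔽_r = C ∩ 𝔽_r^n, as an 𝔽_r-subspace, where 𝔽_r is
identified with the image of K inside L. -/
def subfieldSubcode (K : Type*) {L : Type*} [Field K] [Field L] [Algebra K L]
    {ι : Type*} (C : Submodule L (ι → L)) : Submodule K (ι → L) :=
  C.restrictScalars K ⊓
    Submodule.pi Set.univ fun _ => Subalgebra.toSubmodule (⊥ : Subalgebra K L)

open Module

/-!
Delsarte's theorem, in the form `C|𝔽_r = (Tr C^⊥)^⊥`, says that the subfield subcode has dimension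
`n - dim Tr(C^⊥)`. Rank–nullity for the trace on `C^⊥`, a space of dimension `h (n - k)` over `𝔽_r`,
turns this into Véron's formula. Delsarte's theorem itself comes from the nondegeneracy of the
trace form, so the argument works for every finite separable extension.
-/

section DualCode

variable {F ι : Type*} [Field F] [Fintype ι]

lemma mem_dualCode {C : Submodule F (ι → F)} {c : ι → F} :
    c ∈ dualCode C ↔ ∀ u ∈ C, u ⬝ᵥ c = 0 :=
  Iff.rfl

variable (F ι) in
/-- The standard bilinear form on `F^ι`, i.e. `dotProductBilin` at the type on which
`LinearMap.BilinForm.orthogonal` operates; dual codes are its orthogonal complements. -/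
def dotProductForm : LinearMap.BilinForm F (ι → F) :=
  dotProductBilin F F

lemma isRefl_dotProductForm : (dotProductForm F ι).IsRefl :=
  fun u v h ↦ (dotProduct_comm v u).trans h

lemma nondegenerate_dotProductForm : (dotProductForm F ι).Nondegenerate :=
  (LinearMap.IsRefl.nondegenerate_iff_separatingLeft (B := dotProductForm F ι)
    isRefl_dotProductForm).2 dotProduct_eq_zero

lemma dualCode_eq_orthogonal (C : Submodule F (ι → F)) :
    dualCode C = (dotProductForm F ι).orthogonal C :=
  rfl

lemma dualCode_dualCode (C : Submodule F (ι → F)) : dualCode (dualCode C) = C := by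
  rw [dualCode_eq_orthogonal, dualCode_eq_orthogonal,
    LinearMap.BilinForm.orthogonal_orthogonal nondegenerate_dotProductForm isRefl_dotProductForm]

lemma finrank_add_finrank_dualCode (C : Submodule F (ι → F)) :
    finrank F C + finrank F (dualCode C) = Fintype.card ι := by
  rw [dualCode_eq_orthogonal, LinearMap.BilinForm.finrank_orthogonal nondegenerate_dotProductForm,
    Nat.add_sub_of_le C.finrank_le, finrank_fintype_fun_eq_card]

end DualCode

lemma finrank_map_add_finrank_inf_ker {K V W : Type*} [DivisionRing K]
    [AddCommGroup V] [Module K V] [AddCommGroup W] [Module K W]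
    (f : V →ₗ[K] W) (p : Submodule K V) [FiniteDimensional K p] :
    finrank K (p.map f) + finrank K (p ⊓ LinearMap.ker f : Submodule K V) = finrank K p := by
  rw [← LinearMap.range_domRestrict, ← Submodule.map_comap_subtype,
    Submodule.finrank_map_subtype_eq, ← LinearMap.ker_domRestrict,
    LinearMap.finrank_range_add_finrank_ker]

section Extension

variable (K : Type*) {L ι : Type*} [Field K] [Field L] [Algebra K L]

variable (L ι) in
/-- The inclusion `K^ι → L^ι` of words over the subfield, used to regard a subfield subcode as a
code over `K`. -/
def wordInclusion : (ι → K) →ₗ[K] (ι → L) :=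
  (Algebra.linearMap K L).compLeft ι

variable (L ι) in
/-- The coordinatewise trace `Tr : L^ι → K^ι`. It takes values in `K^ι`, unlike `trFun`, whose
values lie in the big field. -/
noncomputable def wordTrace : (ι → L) →ₗ[K] (ι → K) :=
  (Algebra.trace K L).compLeft ι

/-- The trace code `Tr(D) ⊆ K^ι` of a code `D` over the big field; for `D = C^⊥` it is the dual of
the subfield subcode of `C`. -/
noncomputable def traceCode (D : Submodule L (ι → L)) : Submodule K (ι → K) :=
  (D.restrictScalars K).map (wordTrace K L ι)

/-- The kernel of the coordinatewise trace restricted to `D`, as a `K`-subspace of the ambient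
space `L^ι`. -/
noncomputable def traceKernel (D : Submodule L (ι → L)) : Submodule K (ι → L) :=
  D.restrictScalars K ⊓ LinearMap.ker (wordTrace K L ι)

lemma wordInclusion_injective : Function.Injective (wordInclusion K L ι) :=
  (algebraMap K L).injective.comp_left

lemma range_wordInclusion :
    LinearMap.range (wordInclusion K L ι) =
      Submodule.pi Set.univ fun _ ↦ Subalgebra.toSubmodule (⊥ : Subalgebra K L) := by
  rw [wordInclusion, LinearMap.range_compLeft, Algebra.toSubmodule_bot, Submodule.one_eq_range]

lemma subfieldSubcode_eq_map_comap (C : Submodule L (ι → L)) :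
    subfieldSubcode K C =
      ((C.restrictScalars K).comap (wordInclusion K L ι)).map (wordInclusion K L ι) := by
  rw [subfieldSubcode, Submodule.map_comap_eq, range_wordInclusion, inf_comm]

lemma finrank_traceCode_add_finrank_traceKernel [Finite ι] [FiniteDimensional K L]
    (D : Submodule L (ι → L)) :
    finrank K (traceCode K D) + finrank K (traceKernel K D) = finrank K L * finrank L D :=
  (finrank_map_add_finrank_inf_ker _ _).trans (finrank_mul_finrank K L D).symm

variable [Fintype ι]

lemma wordTrace_dotProduct (u : ι → L) (a : ι → K) :
    wordTrace K L ι u ⬝ᵥ a = Algebra.trace K L (u ⬝ᵥ wordInclusion K L ι a) := by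
  simp only [dotProduct, map_sum]
  refine Finset.sum_congr rfl fun i _ ↦ ?_
  calc Algebra.trace K L (u i) * a i
      = Algebra.trace K L (a i • u i) := by rw [map_smul, smul_eq_mul, mul_comm]
    _ = Algebra.trace K L (u i * algebraMap K L (a i)) := by rw [Algebra.smul_def, mul_comm]

variable [FiniteDimensional K L] [Algebra.IsSeparable K L]

lemma mem_dualCode_iff_trace {D : Submodule L (ι → L)} {v : ι → L} :
    v ∈ dualCode D ↔ ∀ u ∈ D, Algebra.trace K L (u ⬝ᵥ v) = 0 := by
  refine ⟨fun hv u hu ↦ by rw [mem_dualCode.1 hv u hu, map_zero], fun hv u hu ↦ ?_⟩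
  refine (traceForm_nondegenerate K L).1 _ fun c ↦ ?_
  -- `D` is closed under multiplication by `L`, so the trace also kills all multiples of `u ⬝ᵥ v`.
  calc Algebra.trace K L ((u ⬝ᵥ v) * c)
      = Algebra.trace K L (c • u ⬝ᵥ v) := by rw [smul_dotProduct, smul_eq_mul, mul_comm]
    _ = 0 := hv (c • u) (D.smul_mem c hu)

lemma dualCode_traceCode (D : Submodule L (ι → L)) :
    dualCode (traceCode K D) =
      ((dualCode D).restrictScalars K).comap (wordInclusion K L ι) := by
  ext a
  calc a ∈ dualCode (traceCode K D)
      ↔ ∀ u ∈ D, wordTrace K L ι u ⬝ᵥ a = 0 := Set.forall_mem_image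
    _ ↔ ∀ u ∈ D, Algebra.trace K L (u ⬝ᵥ wordInclusion K L ι a) = 0 := by
      simp only [wordTrace_dotProduct]
    _ ↔ wordInclusion K L ι a ∈ dualCode D := (mem_dualCode_iff_trace K).symm

/-- Delsarte's theorem. -/
lemma subfieldSubcode_eq_map_dualCode_traceCode (C : Submodule L (ι → L)) :
    subfieldSubcode K C = (dualCode (traceCode K (dualCode C))).map (wordInclusion K L ι) := by
  rw [dualCode_traceCode, dualCode_dualCode, subfieldSubcode_eq_map_comap]

lemma finrank_subfieldSubcode_add_finrank_traceCode (C : Submodule L (ι → L)) :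
    finrank K (subfieldSubcode K C) + finrank K (traceCode K (dualCode C)) = Fintype.card ι := by
  rw [subfieldSubcode_eq_map_dualCode_traceCode,
    ← (Submodule.equivMapOfInjective _ (wordInclusion_injective K) _).finrank_eq, add_comm,
    finrank_add_finrank_dualCode]

theorem veron_dim_subfieldSubcode_general (C : Submodule L (ι → L)) :
    finrank K (subfieldSubcode K C) + finrank K L * (Fintype.card ι - finrank L C) =
      Fintype.card ι + finrank K (traceKernel K (dualCode C)) := by
  calc finrank K (subfieldSubcode K C) + finrank K L * (Fintype.card ι - finrank L C)
      = finrank K (subfieldSubcode K C) + finrank K L * finrank L (dualCode C) := by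
        rw [← finrank_add_finrank_dualCode C, Nat.add_sub_cancel_left]
    _ = finrank K (subfieldSubcode K C) +
          (finrank K (traceCode K (dualCode C)) + finrank K (traceKernel K (dualCode C))) := by
        rw [finrank_traceCode_add_finrank_traceKernel]
    _ = Fintype.card ι + finrank K (traceKernel K (dualCode C)) := by
        rw [← add_assoc, finrank_subfieldSubcode_add_finrank_traceCode]

end Extension

section FiniteField

variable {K L : Type*} [Field K] [Fintype K] [Field L] [Algebra K L]

lemma finrank_eq_of_card_eq_card_pow [Fintype L] {h : ℕ}
    (hcard : Fintype.card L = Fintype.card K ^ h) : finrank K L = h :=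
  Nat.pow_right_injective Fintype.one_lt_card (card_eq_pow_finrank.symm.trans hcard)

variable [Finite L]

lemma trFun_eq_algebraMap_trace (x : L) :
    trFun L (Fintype.card K) (finrank K L) x = algebraMap K L (Algebra.trace K L x) := by
  rw [FiniteField.algebraMap_trace_eq_sum_pow, Nat.card_eq_fintype_card, trFun]

lemma coe_traceKernel {ι : Type*} (D : Submodule L (ι → L)) :
    (traceKernel K D : Set (ι → L)) =
      {u | u ∈ D ∧ ∀ i, trFun L (Fintype.card K) (finrank K L) (u i) = 0} := by
  ext u
  simp only [trFun_eq_algebraMap_trace, map_eq_zero]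
  exact and_congr_right fun _ ↦ funext_iff

end FiniteField

/-- Véron's formula: k₀ = n - h(n-k) + dim_{𝔽_r} ker(Tr|_{C^⊥}),
stated in the subtraction-free form k₀ + h(n-k) = n + dim ker(Tr|_{C^⊥}), where the
kernel of the coordinatewise trace restricted to C^⊥ is an 𝔽_r-subspace of C^⊥. -/
theorem veron_dim_subfieldSubcode (r h n k : ℕ) (hh : 0 < h)
    (K L : Type*) [Field K] [Fintype K] [Field L] [Fintype L] [Algebra K L]
    (hcK : Fintype.card K = r) (hcL : Fintype.card L = r ^ h)
    (C : Submodule L (Fin n → L)) (hk : Module.finrank L C = k) :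
    ∃ N : Submodule K (Fin n → L),
      (N : Set (Fin n → L)) =
        {u : Fin n → L | u ∈ dualCode C ∧ ∀ i, trFun L r h (u i) = 0} ∧
      Module.finrank K (subfieldSubcode K C) + h * (n - k) = n + Module.finrank K N := by
  subst hk hcK
  obtain rfl := finrank_eq_of_card_eq_card_pow hcL
  exact ⟨traceKernel K (dualCode C), coe_traceKernel _, by
    simpa only [Fintype.card_fin] using veron_dim_subfieldSubcode_general K C⟩
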